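/- arXiv:1801.06214 — 5 statements merged into one kernel-verified Lean document; each statement's English description precedes it below -/
import Mathlib

section
/- Let ℓ be a prime and let α ∈ ℚ be a rational number, regarded as an element of ℚ_ℓ. Then the Ruban continued fraction expansion of α terminates if and only if every complete quotient α_n of the expansion (which is a rational number) is non-negative. -/
open Filter Topology
open scoped Classical

/-- `a` is the `ℓ`-adic integral part of the rational number `α`. -/
def IsRubanFloorQ (p : ℕ) (α a : ℚ) : Prop :=
  (∃ (m : ℤ) (k : ℕ), a = (m : ℚ) / (p : ℚ) ^ k) ∧ 0 ≤ a ∧ a < (p : ℚ) ∧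
    padicNorm p (α - a) < 1

noncomputable def rubanFloorQ (p : ℕ) (α : ℚ) : ℚ :=
  if h : ∃ a : ℚ, IsRubanFloorQ p α a then h.choose else 0

/-- Complete quotients of the Ruban continued fraction expansion of a rational number. -/
noncomputable def rubanCQQ (p : ℕ) (α : ℚ) : ℕ → ℚ
  | 0 => α
  | n + 1 => (rubanCQQ p α n - rubanFloorQ p (rubanCQQ p α n))⁻¹

/-- Partial quotients of the Ruban continued fraction expansion of a rational number. -/
noncomputable def rubanPQQ (p : ℕ) (α : ℚ) (n : ℕ) : ℚ :=
  rubanFloorQ p (rubanCQQ p α n)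

/-- The Ruban continued fraction expansion of `α` terminates. -/
def RubanTerminatesQ (p : ℕ) (α : ℚ) : Prop :=
  ∃ n, rubanCQQ p α n = rubanPQQ p α n


/-- An integer with `p`-adic norm below `p ^ (-k)` is divisible by `p ^ (k+1)`. -/
lemma ruban_dvd_of_norm (p : ℕ) (hp : p.Prime) (w : ℤ) (k : ℕ) (β : ℚ) (y : ℕ)
    (hβ : padicNorm p β < 1) (hw : (w : ℚ) = β * y * (p : ℚ) ^ k) :
    ∃ z : ℤ, w = (p : ℤ) ^ (k + 1) * z := by
  have : Fact p.Prime := ⟨hp⟩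
  have hp0 : (0 : ℚ) < p := by exact_mod_cast hp.pos
  have hp1 : (1 : ℚ) < p := by exact_mod_cast hp.one_lt
  have hy : padicNorm p (y : ℚ) ≤ 1 := by exact_mod_cast padicNorm.of_int (p := p) (y : ℤ)
  -- `p ^ k` divides `w`, then the quotient has norm less than one
  have h1 : padicNorm p (β * y) < 1 := by
    rw [padicNorm.mul]
    calc _ ≤ padicNorm p β * 1 := by
            gcongr
            exact padicNorm.nonneg _
      _ < 1 := by simpa using hβ
  have hpk : padicNorm p ((p : ℚ) ^ k) = (p : ℚ) ^ (-(k : ℤ)) := by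
    have h : ∀ n : ℕ, padicNorm p ((p : ℚ) ^ n) = (padicNorm p (p : ℚ)) ^ n := by
      intro n
      induction n with
      | zero => simp
      | succ n ih => rw [pow_succ, padicNorm.mul, ih, pow_succ]
    rw [h, padicNorm.padicNorm_p hp.one_lt]
    simp
  have hwn : padicNorm p (w : ℚ) = padicNorm p (β * y) * (p : ℚ) ^ (-(k : ℤ)) := by
    rw [hw, padicNorm.mul, hpk]
  have hd : ((p ^ k : ℕ) : ℤ) ∣ w := by
    rw [padicNorm.dvd_iff_norm_le, hwn]
    have : (0 : ℚ) < (p : ℚ) ^ (-(k : ℤ)) := by positivity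
    nlinarith
  obtain ⟨u, hu⟩ := hd
  have hu' : (u : ℚ) = β * y := by
    have hne : (p : ℚ) ^ k ≠ 0 := by positivity
    have : (w : ℚ) = (p : ℚ) ^ k * u := by rw [hu]; push_cast; ring
    apply mul_left_cancel₀ hne
    rw [← this, hw]; ring
  have : (p : ℤ) ∣ u := by
    rw [← padicNorm.int_lt_one_iff, hu']
    exact h1
  obtain ⟨z, hz⟩ := this
  refine ⟨z, ?_⟩
  rw [hu, hz]; push_cast; ring

lemma rubanFloorQ_nonneg (p : ℕ) (α : ℚ) : 0 ≤ rubanFloorQ p α := by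
  unfold rubanFloorQ
  split_ifs with h
  · exact h.choose_spec.2.1
  · exact le_rfl

lemma rubanFloorQ_zero (p : ℕ) (hp : p.Prime) : rubanFloorQ p 0 = 0 := by
  unfold rubanFloorQ
  split_ifs with h
  · obtain ⟨⟨m, k, hm⟩, h0, h1, h2⟩ := h.choose_spec
    generalize h.choose = a at *
    have hp0 : (0 : ℚ) < p := by exact_mod_cast hp.pos
    have hpk : (0 : ℚ) < (p : ℚ) ^ k := by positivity
    rw [zero_sub, padicNorm.neg] at h2
    obtain ⟨z, hz⟩ := ruban_dvd_of_norm p hp m k a 1 h2 (by rw [hm]; field_simp; simp)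
    have ha : a = p * z := by
      rw [hm, hz]; push_cast; field_simp; ring
    rw [ha] at h0 h1
    have hz0 : (0 : ℚ) ≤ z := by
      by_contra hc
      push Not at hc
      nlinarith
    have hz1 : (z : ℚ) < 1 := by
      by_contra hc
      push Not at hc
      nlinarith
    have : z = 0 := by
      have a1 : (0 : ℤ) ≤ z := by exact_mod_cast hz0
      have a2 : z < 1 := by exact_mod_cast hz1
      omega
    rw [ha, this]; simp
  · rfl

lemma rubanFloorQ_spec (p : ℕ) (hp : p.Prime) (x y k : ℕ) (hy : 0 < y) (hc : Nat.Coprime y p) :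
    IsRubanFloorQ p ((x : ℚ) / (y * (p : ℚ) ^ k)) (rubanFloorQ p ((x : ℚ) / (y * (p : ℚ) ^ k))) := by
  have : Fact p.Prime := ⟨hp⟩
  have hex : ∃ a : ℚ, IsRubanFloorQ p ((x : ℚ) / (y * (p : ℚ) ^ k)) a := by
    have hp0 : (0 : ℚ) < p := by exact_mod_cast hp.pos
    have hy0 : (0 : ℚ) < y := by exact_mod_cast hy
    have hcop : IsCoprime (y : ℤ) ((p : ℤ) ^ (k + 1)) := by
      apply IsCoprime.pow_right
      exact Nat.isCoprime_iff_coprime.mpr hc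
    obtain ⟨u, v, huv⟩ := hcop
    have hP : (0 : ℤ) < (p : ℤ) ^ (k + 1) := by
      have : (0 : ℤ) < p := by exact_mod_cast hp.pos
      positivity
    set P : ℤ := (p : ℤ) ^ (k + 1) with hPdef
    have hm := Int.emod_add_mul_ediv (x * u) P
    have hm0 := Int.emod_nonneg (x * u) hP.ne'
    have hm1 := Int.emod_lt_of_pos (x * u) hP
    set m := (x * u) % P
    set q := (x * u) / P
    -- x - m y = P * z
    have hz : (x : ℤ) - m * y = P * (x * v + q * y) := by
      have : m = x * u - P * q := by linarith
      rw [this]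
      linear_combination (-(x : ℤ)) * huv
    have hpk : (0 : ℚ) < (p : ℚ) ^ k := by positivity
    have hPQ : (P : ℚ) = (p : ℚ) ^ k * p := by rw [hPdef]; push_cast; ring
    refine ⟨(m : ℚ) / (p : ℚ) ^ k, ⟨m, k, rfl⟩, ?_, ?_, ?_⟩
    · have : (0 : ℚ) ≤ m := by exact_mod_cast hm0
      positivity
    · rw [div_lt_iff₀ hpk]
      have : (m : ℚ) < P := by exact_mod_cast hm1
      rw [hPQ] at this
      linarith
    · have hzq : (x : ℚ) - m * y = (p : ℚ) ^ k * p * ((x * v + q * y : ℤ) : ℚ) := by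
        rw [← hPQ]; exact_mod_cast hz
      have hyn : padicNorm p (y : ℚ) = 1 := by
        rw [padicNorm.nat_eq_one_iff]
        exact (Nat.Prime.coprime_iff_not_dvd hp).mp hc.symm
      have heq : (x : ℚ) / (y * (p : ℚ) ^ k) - m / (p : ℚ) ^ k
          = ((p : ℤ) * (x * v + q * y : ℤ) : ℤ) / y := by
        have : (x : ℚ) / (y * (p : ℚ) ^ k) - m / (p : ℚ) ^ k
          = (x - m * y) / (y * (p : ℚ) ^ k) := by field_simp
        rw [this, hzq]; push_cast; field_simp
      rw [heq, padicNorm.div, hyn, div_one, padicNorm.int_lt_one_iff]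
      exact Dvd.intro _ rfl
  unfold rubanFloorQ
  rw [dif_pos hex]
  exact hex.choose_spec

/-- A rational `≥ 0` is `x / (y p^k)` with `y` prime to `p`. -/
lemma ruban_split (p : ℕ) (hp : p.Prime) (d : ℕ) (hd : 0 < d) :
    ∃ y k : ℕ, 0 < y ∧ y ≤ d ∧ Nat.Coprime y p ∧ d = y * p ^ k := by
  obtain ⟨k, y, hy, h⟩ := Nat.exists_eq_pow_mul_and_not_dvd hd.ne' p hp.ne_one
  refine ⟨y, k, ?_, ?_, ?_, ?_⟩
  · rcases Nat.eq_zero_or_pos y with h0 | h0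
    · simp [h0] at hy
    · exact h0
  · rw [h]; exact Nat.le_mul_of_pos_left _ (pow_pos hp.pos _)
  · exact ((Nat.Prime.coprime_iff_not_dvd hp).mpr hy).symm
  · rw [h, mul_comm]

/-- The descent step. -/
lemma ruban_step (p : ℕ) (hp : p.Prime) (α : ℚ) (x y k : ℕ) (hy : 0 < y)
    (hc : Nat.Coprime y p) (hα : α = (x : ℚ) / (y * (p : ℚ) ^ k))
    (hne : α ≠ rubanFloorQ p α) (hnn : 0 ≤ (α - rubanFloorQ p α)⁻¹) :
    ∃ x' y' k' : ℕ, 0 < y' ∧ Nat.Coprime y' p ∧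
      (α - rubanFloorQ p α)⁻¹ = (x' : ℚ) / (y' * (p : ℚ) ^ k') ∧ x' * y' + 1 ≤ x * y := by
  have hspec := rubanFloorQ_spec p hp x y k hy hc
  rw [← hα] at hspec
  obtain ⟨⟨m, j, hm⟩, h0, -, h2⟩ := hspec
  generalize rubanFloorQ p α = a at *
  have hp0 : (0 : ℚ) < p := by exact_mod_cast hp.pos
  have hy0 : (0 : ℚ) < y := by exact_mod_cast hy
  have hβ : 0 < α - a := lt_of_le_of_ne (inv_nonneg.mp hnn) (sub_ne_zero.mpr hne).symm
  obtain ⟨z, hz⟩ := ruban_dvd_of_norm p hp (x * p ^ j - m * y * p ^ k) (k + j) (α - a) y h2 (by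
    rw [hm, hα]; push_cast; field_simp; ring)
  have hzq : (α - a) * y = p * z := by
    have h3 : (x : ℚ) * p ^ j - m * y * p ^ k = (p : ℚ) ^ (k + j + 1) * z := by exact_mod_cast hz
    have h4 : (α - a) * y * (p : ℚ) ^ (k + j) = x * p ^ j - m * y * p ^ k := by
      rw [hm, hα]; field_simp; ring
    have hne : (p : ℚ) ^ (k + j) ≠ 0 := by positivity
    apply mul_right_cancel₀ hne
    rw [h4, h3]; ring
  have hzpos : (0 : ℚ) < z := by
    have : 0 < (p : ℚ) * z := by rw [← hzq]; positivity
    exact pos_of_mul_pos_right this hp0.le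
  have hzi : 0 < z := by exact_mod_cast hzpos
  lift z to ℕ using hzi.le with n
  have hn : 0 < n := by exact_mod_cast hzi
  have hle : (p : ℚ) * n ≤ x := by
    have h5 : α * y ≤ x := by
      have h6 : α * y = x / (p : ℚ) ^ k := by rw [hα]; field_simp
      rw [h6]
      apply div_le_self (by positivity)
      apply one_le_pow₀
      exact_mod_cast hp.one_lt.le
    have h7 : (α - a) * y ≤ α * y := by nlinarith
    have : (p : ℚ) * n = (α - a) * y := by rw [hzq]; simp
    linarith
  have hleN : p * n ≤ x := by exact_mod_cast hle
  obtain ⟨y', i, hy', hy'le, hc', hni⟩ := ruban_split p hp n hn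
  refine ⟨y, y', i + 1, hy', hc', ?_, ?_⟩
  · have hy'0 : (0 : ℚ) < y' := by exact_mod_cast hy'
    have h8 : α - a = p * (y' * p ^ i) / y := by
      rw [eq_div_iff hy0.ne', hzq, hni]; push_cast; ring
    rw [h8, inv_div]
    congr 1; ring
  · have h9 := hp.two_le
    have h10 : 2 * y' ≤ x := le_trans (Nat.mul_le_mul h9 hy'le) hleN
    nlinarith

/-- For a prime `ℓ` and a rational `α`, the Ruban continued fraction
expansion of `α` terminates if and only if all complete quotients are non-negative. -/
theorem ruban_terminates_iff_all_complete_quotients_nonneg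
    (ℓ : ℕ) (hℓ : ℓ.Prime) (α : ℚ) :
    RubanTerminatesQ ℓ α ↔ ∀ n : ℕ, 0 ≤ rubanCQQ ℓ α n := by
  constructor
  · rintro ⟨n, hn⟩ 
    have hn' : rubanCQQ ℓ α n = rubanFloorQ ℓ (rubanCQQ ℓ α n) := hn
    have hafter : ∀ i, rubanCQQ ℓ α (n + 1 + i) = 0 := by
      intro i
      induction i with
      | zero =>
        show (rubanCQQ ℓ α n - rubanFloorQ ℓ (rubanCQQ ℓ α n))⁻¹ = 0
        rw [← hn', sub_self, inv_zero]
      | succ i ih =>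
        show (rubanCQQ ℓ α (n + 1 + i) - rubanFloorQ ℓ (rubanCQQ ℓ α (n + 1 + i)))⁻¹ = 0
        rw [ih, rubanFloorQ_zero ℓ hℓ, sub_self, inv_zero]
    have hback : ∀ i, 0 ≤ rubanCQQ ℓ α (i + 1) → 0 ≤ rubanCQQ ℓ α i := by
      intro i hi
      have h1 : 0 ≤ (rubanCQQ ℓ α i - rubanFloorQ ℓ (rubanCQQ ℓ α i))⁻¹ := hi
      have h2 := inv_nonneg.mp h1
      have h3 := rubanFloorQ_nonneg ℓ (rubanCQQ ℓ α i)
      linarith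
    have hdown : ∀ d i, 0 ≤ rubanCQQ ℓ α (i + d) → 0 ≤ rubanCQQ ℓ α i := by
      intro d
      induction d with
      | zero => intro i h; exact h
      | succ d ih => intro i h; exact ih i (hback _ h)
    intro i
    apply hdown (n + 1) i
    rw [show i + (n + 1) = n + 1 + i by ring, hafter]
  · intro h
    by_contra hT
    have hne : ∀ n, rubanCQQ ℓ α n ≠ rubanFloorQ ℓ (rubanCQQ ℓ α n) := fun n hn => hT ⟨n, hn⟩
    obtain ⟨y, k, hy, -, hc, hd⟩ := ruban_split ℓ hℓ α.den α.den_pos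
    have key : ∀ n, ∃ x' y' k' : ℕ, 0 < y' ∧ Nat.Coprime y' ℓ ∧
        rubanCQQ ℓ α n = (x' : ℚ) / (y' * (ℓ : ℚ) ^ k') ∧ x' * y' + n ≤ α.num.toNat * y := by
      intro n
      induction n with
      | zero =>
        refine ⟨α.num.toNat, y, k, hy, hc, ?_, le_rfl⟩
        have h0 : 0 ≤ α := h 0
        have h1 : ((α.num.toNat : ℕ) : ℚ) = α.num := by
          exact_mod_cast Int.toNat_of_nonneg (Rat.num_nonneg.mpr h0)
        have h2 : (y : ℚ) * (ℓ : ℚ) ^ k = α.den := by rw [hd]; push_cast; ring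
        rw [h1, h2, Rat.num_div_den]; rfl
      | succ n ih =>
        obtain ⟨x1, y1, k1, hy1, hc1, he, hle⟩ := ih
        obtain ⟨x2, y2, k2, hy2, hc2, he2, hle2⟩ :=
          ruban_step ℓ hℓ _ x1 y1 k1 hy1 hc1 he (hne n) (h (n + 1))
        exact ⟨x2, y2, k2, hy2, hc2, he2, by omega⟩
    obtain ⟨x', y', -, -, -, -, hle⟩ := key (α.num.toNat * y + 1)
    omega
end

section
/- Let ℓ be a prime and let α ∈ ℚ be a rational number regarded as an element of ℚ_ℓ. If the Ruban continued fraction expansion of α does not terminate, then it is periodic with all partial quotients eventually equal to ℓ − ℓ^{-1}; that is, there exists N ≥ 0 such that a_n = ℓ − 1/ℓ for all n ≥ N. -/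
open Filter Topology
open scoped Classical

lemma padicNorm_lt_one_of_form {p : ℕ} (hp : p.Prime) {w : ℤ} {k : ℕ} {y : ℤ} (hy : ¬ (p : ℤ) ∣ y)
    (hw : (p : ℤ) ^ (k + 1) ∣ w) : padicNorm p ((w : ℚ) / ((p : ℚ) ^ k * y)) < 1 := by
  have : Fact p.Prime := ⟨hp⟩
  obtain ⟨t, rfl⟩ := hw
  have hp0 : (p : ℚ) ≠ 0 := by exact_mod_cast hp.ne_zero
  have hy0 : (y : ℚ) ≠ 0 := by
    intro h
    apply hy
    have : y = 0 := by exact_mod_cast h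
    simp [this]
  have h1 : (((p : ℤ) ^ (k + 1) * t : ℤ) : ℚ) / ((p : ℚ) ^ k * y) = ((p * t : ℤ) : ℚ) / y := by
    push_cast
    field_simp
    ring
  rw [h1, padicNorm.div, (padicNorm.int_eq_one_iff y).2 hy, div_one]
  exact (padicNorm.int_lt_one_iff _).2 (dvd_mul_right _ _)

lemma floor_unique {p : ℕ} (hp : p.Prime) {α a b : ℚ} (ha : IsRubanFloorQ p α a)
    (hb : IsRubanFloorQ p α b) : a = b := by
  have : Fact p.Prime := ⟨hp⟩
  obtain ⟨⟨m, k, rfl⟩, ha0, ha1, ha2⟩ := ha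
  obtain ⟨⟨n, j, rfl⟩, hb0, hb1, hb2⟩ := hb
  have hp0 : (p : ℚ) ≠ 0 := by exact_mod_cast hp.ne_zero
  have hpos : (0 : ℚ) < p := by exact_mod_cast hp.pos
  set d : ℚ := (m : ℚ) / (p : ℚ) ^ k - n / (p : ℚ) ^ j with hd
  have hdn : padicNorm p d < 1 := by
    have : d = (α - n / (p : ℚ) ^ j) - (α - m / (p : ℚ) ^ k) := by rw [hd]; ring
    rw [this]
    exact lt_of_le_of_lt padicNorm.sub (max_lt hb2 ha2)
  have hde : d * (p : ℚ) ^ (k + j) = ((m * (p : ℤ) ^ j - n * (p : ℤ) ^ k : ℤ) : ℚ) := by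
    rw [hd]; push_cast; field_simp; ring
  set w : ℤ := m * (p : ℤ) ^ j - n * (p : ℤ) ^ k with hw
  have hdvd : (p : ℤ) ^ (k + j + 1) ∣ w := by
    have hpd : padicNorm p d ≤ (p : ℚ) ^ (-1 : ℤ) := by
      by_cases h0 : d = 0
      · rw [h0, padicNorm.zero]; positivity
      · rw [padicNorm.eq_zpow_of_nonzero h0] at hdn ⊢
        have h1p : (1 : ℚ) < p := by exact_mod_cast hp.one_lt
        rw [zpow_lt_one_iff_right₀ h1p] at hdn
        rw [zpow_le_zpow_iff_right₀ h1p]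
        omega
    have := (padicNorm.dvd_iff_norm_le (p := p) (n := k + j + 1) (z := w)).2 (by
      rw [← hde, padicNorm.mul]
      have h2 : padicNorm p ((p : ℚ) ^ (k + j)) = (p : ℚ) ^ (-((k + j : ℕ) : ℤ)) := by
        rw [zpow_neg, zpow_natCast]
        generalize k + j = n
        induction n with
        | zero => simp
        | succ n ih =>
          rw [pow_succ, padicNorm.mul, ih, padicNorm.padicNorm_p_of_prime, mul_inv]
      rw [h2]
      calc _ ≤ (p : ℚ) ^ (-1 : ℤ) * (p : ℚ) ^ (-((k + j : ℕ) : ℤ)) := by gcongr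
        _ = _ := by rw [← zpow_add₀ hp0]; congr 1; push_cast; ring)
    exact_mod_cast this
  obtain ⟨t, ht⟩ := hdvd
  have hdt : d = p * t := by
    have h3 : d * (p : ℚ) ^ (k + j) = (p * t) * (p : ℚ) ^ (k + j) := by
      rw [hde, ht]; push_cast; ring
    exact mul_right_cancel₀ (pow_ne_zero _ hp0) h3
  have h1 : (t : ℚ) < 1 := by
    have : (p : ℚ) * t < p * 1 := by linarith
    exact lt_of_mul_lt_mul_left this hpos.le
  have h2 : (-1 : ℚ) < t := by
    have : (p : ℚ) * (-1) < p * t := by linarith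
    exact lt_of_mul_lt_mul_left this hpos.le
  have ht0 : t = 0 := by
    have h1' : t < 1 := by exact_mod_cast h1
    have h2' : -1 < t := by exact_mod_cast h2
    omega
  rw [ht0] at hdt
  simp at hdt
  linarith

lemma floor_eq {p : ℕ} (hp : p.Prime) {α a : ℚ} (ha : IsRubanFloorQ p α a) :
    rubanFloorQ p α = a := by
  have h : ∃ a, IsRubanFloorQ p α a := ⟨a, ha⟩
  rw [rubanFloorQ, dif_pos h]
  exact floor_unique hp h.choose_spec ha

lemma floor_form {p : ℕ} (hp : p.Prime) {α : ℚ} {x y : ℤ} {k : ℕ} (hy : ¬ (p : ℤ) ∣ y)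
    (hα : α = (x : ℚ) / ((p : ℚ) ^ k * y)) :
    ∃ c : ℤ, 0 ≤ c ∧ c < (p : ℤ) ^ (k + 1) ∧ (p : ℤ) ^ (k + 1) ∣ x - c * y ∧
      rubanFloorQ p α = c / (p : ℚ) ^ k := by
  have hp0 : (p : ℚ) ≠ 0 := by exact_mod_cast hp.ne_zero
  have hpos : (0 : ℚ) < p := by exact_mod_cast hp.pos
  have hy0 : (y : ℚ) ≠ 0 := by
    intro h
    apply hy
    have : y = 0 := by exact_mod_cast h
    simp [this]
  have hcop : IsCoprime ((p : ℤ) ^ (k + 1)) y :=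
    IsCoprime.pow_left (((Nat.prime_iff_prime_int.1 hp).coprime_iff_not_dvd).2 hy)
  obtain ⟨u, v, huv⟩ := hcop
  have hP : (0 : ℤ) < (p : ℤ) ^ (k + 1) := by have := hp.pos; positivity
  set c : ℤ := (x * v) % (p : ℤ) ^ (k + 1) with hc
  have hc0 : 0 ≤ c := Int.emod_nonneg _ hP.ne'
  have hc1 : c < (p : ℤ) ^ (k + 1) := Int.emod_lt_of_pos _ hP
  have hdvd : (p : ℤ) ^ (k + 1) ∣ x - c * y := by
    refine ⟨x * u + (x * v / (p : ℤ) ^ (k + 1)) * y, ?_⟩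
    have h1 := Int.mul_ediv_add_emod (x * v) ((p : ℤ) ^ (k + 1))
    rw [← hc] at h1
    linear_combination (-x) * huv - y * h1
  refine ⟨c, hc0, hc1, hdvd, floor_eq hp ⟨⟨c, k, rfl⟩, ?_, ?_, ?_⟩⟩
  · have : (0 : ℚ) ≤ c := by exact_mod_cast hc0
    positivity
  · rw [div_lt_iff₀ (by positivity)]
    have : (c : ℚ) < (p : ℚ) ^ (k + 1) := by exact_mod_cast hc1
    rwa [pow_succ'] at this
  · have : α - c / (p : ℚ) ^ k = ((x - c * y : ℤ) : ℚ) / ((p : ℚ) ^ k * y) := by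
      rw [hα]; push_cast; field_simp
    rw [this]
    exact padicNorm_lt_one_of_form hp hy hdvd

lemma step_form {p : ℕ} (hp : p.Prime) {α : ℚ} {x y : ℤ} {k : ℕ} (hy : ¬ (p : ℤ) ∣ y)
    (hα : α = (x : ℚ) / ((p : ℚ) ^ k * y)) (hne : α ≠ rubanFloorQ p α) :
    ∃ (c z : ℤ) (j : ℕ), 0 ≤ c ∧ c < (p : ℤ) ^ (k + 1) ∧ ¬ (p : ℤ) ∣ z ∧
      (p : ℤ) ^ (k + 1) * (p : ℤ) ^ j * z = x - c * y ∧
      (α - rubanFloorQ p α)⁻¹ = (y : ℚ) / ((p : ℚ) ^ (j + 1) * z) := by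
  obtain ⟨c, hc0, hc1, ⟨t, ht⟩, hf⟩ := floor_form hp hy hα
  have hp0 : (p : ℚ) ≠ 0 := by exact_mod_cast hp.ne_zero
  have hy0 : (y : ℚ) ≠ 0 := by
    intro h
    apply hy
    have : y = 0 := by exact_mod_cast h
    simp [this]
  have hsub : α - rubanFloorQ p α = ((p : ℚ) * t) / y := by
    have h2 : (x : ℚ) - c * y = (p : ℚ) ^ (k + 1) * t := by exact_mod_cast ht
    rw [hf, hα]
    have : (x : ℚ) / ((p : ℚ) ^ k * y) - c / (p : ℚ) ^ k = (x - c * y) / ((p : ℚ) ^ k * y) := by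
      field_simp
    rw [this, h2]
    field_simp
    ring
  have ht0 : t ≠ 0 := by
    rintro rfl
    apply hne
    simp at hsub
    linarith
  have hfin : FiniteMultiplicity (p : ℤ) t :=
    Int.finiteMultiplicity_iff.2 ⟨by simpa using hp.ne_one, ht0⟩
  obtain ⟨z, hz, hzd⟩ := hfin.exists_eq_pow_mul_and_not_dvd
  refine ⟨c, z, multiplicity (p : ℤ) t, hc0, hc1, hzd, ?_, ?_⟩
  · rw [ht, mul_assoc, ← hz]
  · rw [hsub, inv_div]
    have : (t : ℚ) = (p : ℚ) ^ (multiplicity (p : ℤ) t) * z := by exact_mod_cast hz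
    rw [pow_succ', mul_assoc, ← this]

lemma bound_step {P Q x y z c M : ℤ} (hP : 2 ≤ P) (hQ : 1 ≤ Q) (hc0 : 0 ≤ c) (hc1 : c < P)
    (hx : |x| ≤ M) (hy : |y| ≤ M) (h : P * Q * z = x - c * y) : |z| ≤ M ∧
    (|z| = M → 0 < M → |y| = M ∧ y = - z ∧ Q = 1) := by
  rw [abs_le] at hx hy
  have hM : 0 ≤ M := by linarith
  have key : P * Q * |z| ≤ M + c * |y| := by
    have : P * Q * |z| = |x - c * y| := by
      rw [← h, abs_mul, abs_of_pos (by positivity : 0 < P * Q)]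
    rw [this]
    calc |x - c * y| ≤ |x| + |c * y| := abs_sub _ _
      _ ≤ _ := by rw [abs_mul, abs_of_nonneg hc0]; linarith [abs_le.2 hx]
  have hy' : |y| ≤ M := abs_le.2 hy
  have key2 : M + c * |y| ≤ P * M := by nlinarith
  have hPQ : P ≤ P * Q := by nlinarith
  constructor
  · by_contra! hlt
    nlinarith [abs_nonneg z]
  · intro hz hMp
    rw [hz] at key
    have hQ1 : Q = 1 := by
      by_contra hne
      have : 2 ≤ Q := by omega
      nlinarith [mul_pos (by linarith : 0 < P) hMp]
    subst hQ1
    have hcP : c = P - 1 := by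
      by_contra hne
      have : c ≤ P - 2 := by omega
      nlinarith [abs_nonneg y]
    subst hcP
    have hyM : |y| = M := by
      apply le_antisymm hy'
      by_contra! hlt
      nlinarith
    refine ⟨hyM, ?_, rfl⟩
    rcases abs_choice z with h1 | h1 <;> rcases abs_choice y with h2 | h2
    · have e1 : z = M := by linarith
      have e2 : y = M := by linarith
      subst e2; rw [e1] at h; nlinarith
    · linarith
    · linarith
    · have e1 : z = -M := by linarith
      have e2 : y = -M := by linarith
      rw [e1, e2] at h; nlinarith

lemma descent {p : ℕ} (hp : p.Prime) {α : ℚ} (hnt : ¬ RubanTerminatesQ p α) (M : ℕ) :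
    ∀ (n : ℕ) (x y : ℤ) (k : ℕ), ¬ (p : ℤ) ∣ y →
      rubanCQQ p α n = (x : ℚ) / ((p : ℚ) ^ k * y) → |x| ≤ M → |y| ≤ M →
      ∃ N, rubanCQQ p α N = -1 / p := by
  have hne : ∀ n, rubanCQQ p α n ≠ rubanFloorQ p (rubanCQQ p α n) := fun n h => hnt ⟨n, h⟩
  have hp0 : (p : ℚ) ≠ 0 := by exact_mod_cast hp.ne_zero
  have hp2 : (2 : ℤ) ≤ p := by exact_mod_cast hp.two_le
  have hpow : ∀ k : ℕ, (1 : ℤ) ≤ (p : ℤ) ^ k := fun k => one_le_pow₀ (by linarith)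
  have hpow2 : ∀ k : ℕ, (2 : ℤ) ≤ (p : ℤ) ^ (k + 1) := fun k => by
    rw [pow_succ]; nlinarith [hpow k]
  induction M with
  | zero =>
    intro n x y k hy _ _ hyM
    exfalso
    apply hy
    have : y = 0 := by simpa using hyM
    simp [this]
  | succ M ih =>
    intro n x y k hy hα hx hyM
    obtain ⟨c, z, j, hc0, hc1, hz, he, hα1⟩ := step_form hp hy hα (hne n)
    obtain ⟨hzM, hzE⟩ := bound_step (hpow2 k) (hpow j) hc0 hc1 hx hyM he
    have hα1' : rubanCQQ p α (n + 1) = (y : ℚ) / ((p : ℚ) ^ (j + 1) * z) := hα1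
    have hMp : (0 : ℤ) < ((M + 1 : ℕ) : ℤ) := by positivity
    by_cases hzeq : |z| = ((M + 1 : ℕ) : ℤ)
    · obtain ⟨_, hyz, hQ⟩ := hzE hzeq hMp
      refine ⟨n + 1, ?_⟩
      have hQ' : (p : ℚ) ^ j = 1 := by exact_mod_cast hQ
      have hz0 : (z : ℚ) ≠ 0 := by
        intro h
        apply hz
        have : z = 0 := by exact_mod_cast h
        simp [this]
      rw [hα1', pow_succ, hQ', hyz]
      push_cast
      field_simp
    · obtain ⟨c', w, i, hc0', hc1', hw, he', hα2⟩ := step_form hp hz hα1' (hne (n + 1))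
      obtain ⟨hwM, hwE⟩ := bound_step (hpow2 (j + 1)) (hpow i) hc0' hc1' hyM hzM he'
      have hα2' : rubanCQQ p α (n + 2) = (z : ℚ) / ((p : ℚ) ^ (i + 1) * w) := hα2
      have hwne : |w| ≠ ((M + 1 : ℕ) : ℤ) := fun h => hzeq (hwE h hMp).1
      refine ih (n + 2) z w (i + 1) hw hα2' ?_ ?_ <;> push_cast at * <;> omega

/-- If the Ruban continued fraction expansion of a rational `α` does not
terminate, then it is periodic and all partial quotients are eventually `ℓ - 1/ℓ`. -/
theorem ruban_rational_nonterminating_eventually_constant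
    (ℓ : ℕ) (hℓ : ℓ.Prime) (α : ℚ) (hnt : ¬ RubanTerminatesQ ℓ α) :
    (∃ N k : ℕ, 1 ≤ k ∧ ∀ n, N ≤ n → rubanCQQ ℓ α (n + k) = rubanCQQ ℓ α n) ∧
      ∃ N : ℕ, ∀ n, N ≤ n → rubanPQQ ℓ α n = (ℓ : ℚ) - 1 / (ℓ : ℚ) := by
  have : Fact ℓ.Prime := ⟨hℓ⟩
  have hp0 : (ℓ : ℚ) ≠ 0 := by exact_mod_cast hℓ.ne_zero
  have hp1 : (1 : ℚ) < ℓ := by exact_mod_cast hℓ.one_lt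
  have hfl : rubanFloorQ ℓ (-1 / ℓ) = (ℓ : ℚ) - 1 / (ℓ : ℚ) := by
    have hpos : (0 : ℚ) < 1 / ℓ := by positivity
    refine floor_eq hℓ ⟨⟨(ℓ : ℤ) ^ 2 - 1, 1, ?_⟩, ?_, by linarith, ?_⟩
    · push_cast; field_simp
    · have : 1 / (ℓ : ℚ) ≤ 1 := by rw [div_le_one (by linarith)]; linarith
      linarith
    · have : (-1 / ℓ - (ℓ - 1 / ℓ) : ℚ) = -ℓ := by ring
      rw [this, padicNorm.neg]
      exact padicNorm.padicNorm_p_lt_one_of_prime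
  have hstart : ∃ N, rubanCQQ ℓ α N = -1 / ℓ := by
    have hd0 : (α.den : ℤ) ≠ 0 := by exact_mod_cast α.den_nz
    have hfin : FiniteMultiplicity (ℓ : ℤ) (α.den : ℤ) :=
      Int.finiteMultiplicity_iff.2 ⟨by simpa using hℓ.ne_one, hd0⟩
    obtain ⟨y, hy, hyd⟩ := hfin.exists_eq_pow_mul_and_not_dvd
    refine descent hℓ hnt (max α.num.natAbs y.natAbs) 0 α.num y
      (multiplicity (ℓ : ℤ) (α.den : ℤ)) hyd ?_ ?_ ?_
    · have : (α.den : ℚ) = (ℓ : ℚ) ^ (multiplicity (ℓ : ℤ) (α.den : ℤ)) * y := by exact_mod_cast hy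
      rw [← this]
      exact (Rat.num_div_den α).symm
    · rw [Int.abs_eq_natAbs]; exact_mod_cast le_max_left _ _
    · rw [Int.abs_eq_natAbs]; exact_mod_cast le_max_right _ _
  obtain ⟨N, hN⟩ := hstart
  have hall : ∀ n, N ≤ n → rubanCQQ ℓ α n = -1 / ℓ := by
    intro n hn
    induction n, hn using Nat.le_induction with
    | base => exact hN
    | succ n _ ih =>
      rw [rubanCQQ, ih, hfl]
      have : (-1 / ℓ - (ℓ - 1 / ℓ) : ℚ) = -ℓ := by ring
      rw [this]
      field_simp
  refine ⟨⟨N, 1, le_rfl, fun n hn => ?_⟩, N, fun n hn => ?_⟩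
  · rw [hall n hn, hall (n + 1) (by omega)]
  · rw [rubanPQQ, hall n hn, hfl]
end

section
/- Let ℓ be a prime and let α ∈ ℚ be a rational number whose Ruban continued fraction expansion does not terminate. Then the partial quotients satisfy a_n = ℓ − 1/ℓ for all n ≥ 32·ℓ·H(α)², and moreover every complete quotient satisfies H(α_n) ≤ 4·ℓ·H(α). -/
open Filter Topology
open scoped Classical

/-- The multiplicative height of a rational number. -/
def ratHeight (α : ℚ) : ℚ := max (|α.num| : ℚ) (α.den : ℚ)

lemma ruban_floor_unique (p : ℕ) (hp : p.Prime) (α a b : ℚ) (ha : IsRubanFloorQ p α a)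
    (hb : IsRubanFloorQ p α b) : a = b := by
  have : Fact p.Prime := ⟨hp⟩
  obtain ⟨⟨m, k, rfl⟩, ha0, ha1, ha2⟩ := ha
  obtain ⟨⟨m', k', rfl⟩, hb0, hb1, hb2⟩ := hb
  have hp0 : (p : ℚ) ≠ 0 := by exact_mod_cast hp.ne_zero
  set a : ℚ := (m : ℚ) / (p : ℚ) ^ k with hadef
  set b : ℚ := (m' : ℚ) / (p : ℚ) ^ k' with hbdef
  have hd : padicNorm p (a - b) < 1 := by
    have h := padicNorm.sub (p := p) (q := α - b) (r := α - a)
    have e : α - b - (α - a) = a - b := by ring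
    rw [e] at h
    exact lt_of_le_of_lt h (max_lt hb2 ha2)
  have hM : a - b = ((m * p ^ k' - m' * p ^ k : ℤ) : ℚ) / (p : ℚ) ^ (k + k') := by
    rw [hadef, hbdef]; push_cast; field_simp; ring
  set M : ℤ := m * p ^ k' - m' * p ^ k with hMdef
  have hM2 : (M : ℚ) = (a - b) * (p : ℚ) ^ (k + k') := by
    rw [hM]; field_simp
  have hdvd : ((p ^ (k + k') : ℕ) : ℤ) ∣ M := by
    rw [padicNorm.dvd_iff_norm_le, hM2, padicNorm.mul]
    have : padicNorm p ((p : ℚ) ^ (k + k')) = (p : ℚ) ^ (-((k + k' : ℕ) : ℤ)) := by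
      rw [IsAbsoluteValue.abv_pow (padicNorm p), padicNorm.padicNorm_p_of_prime, inv_pow, zpow_neg,
        zpow_natCast]
    rw [this]
    have hpos : (0 : ℚ) < (p : ℚ) ^ (-((k + k' : ℕ) : ℤ)) := by
      have : (0 : ℚ) < p := by exact_mod_cast hp.pos
      positivity
    nlinarith
  obtain ⟨c, hc⟩ := hdvd
  have hab : a - b = (c : ℚ) := by
    rw [hM, hc]; push_cast; field_simp
  rw [hab] at hd
  rw [padicNorm.int_lt_one_iff] at hd
  have h1 : (c : ℚ) < p := by linarith
  have h2 : -(p : ℚ) < c := by linarith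
  have h1' : c < p := by exact_mod_cast h1
  have h2' : -(p : ℤ) < c := by exact_mod_cast h2
  have : c = 0 := Int.eq_zero_of_abs_lt_dvd hd (abs_lt.mpr ⟨h2', h1'⟩)
  rw [this] at hab
  push_cast at hab
  linarith

lemma ruban_floor_eq (p : ℕ) (hp : p.Prime) (α a : ℚ) (ha : IsRubanFloorQ p α a) :
    rubanFloorQ p α = a := by
  have h : ∃ a : ℚ, IsRubanFloorQ p α a := ⟨a, ha⟩
  unfold rubanFloorQ
  rw [dif_pos h]
  exact ruban_floor_unique p hp α _ _ h.choose_spec ha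

/-- A (nearly reduced) representation of a rational number. -/
structure RubanRep (p : ℕ) (α : ℚ) (N : ℤ) (D k : ℕ) : Prop where
  pos : 0 < D
  cop : IsCoprime N (D : ℤ)
  ndvd : ¬ p ∣ D
  eq : α = (N : ℚ) / ((D : ℚ) * (p : ℚ) ^ k)

lemma ruban_floor_rep (p : ℕ) (hp : p.Prime) (α : ℚ) (N : ℤ) (D k : ℕ)
    (h : RubanRep p α N D k) :
    ∃ m c : ℤ, 0 ≤ m ∧ m < (p : ℤ) ^ (k + 1) ∧ N - m * D = (p : ℤ) ^ (k + 1) * c ∧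
      rubanFloorQ p α = (m : ℚ) / (p : ℚ) ^ k := by
  have : Fact p.Prime := ⟨hp⟩
  obtain ⟨hD, -, hnd, heq⟩ := h
  have hp0 : (p : ℚ) ≠ 0 := by exact_mod_cast hp.ne_zero
  have hppos : (0 : ℚ) < p := by exact_mod_cast hp.pos
  have hpz : (0 : ℤ) < (p : ℤ) ^ (k + 1) := by
    have : (0 : ℤ) < p := by exact_mod_cast hp.pos
    positivity
  have hD0 : (D : ℚ) ≠ 0 := by exact_mod_cast hD.ne'
  have hcop : IsCoprime (D : ℤ) ((p : ℤ) ^ (k + 1)) := by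
    apply IsCoprime.pow_right
    rw [Nat.isCoprime_iff_coprime]
    exact ((Nat.Prime.coprime_iff_not_dvd hp).2 hnd).symm
  obtain ⟨u, v, huv⟩ := hcop
  set e : ℤ := (p : ℤ) ^ (k + 1) with he
  have hm0 : 0 ≤ (N * u) % e := Int.emod_nonneg _ hpz.ne'
  have hm1 : (N * u) % e < e := Int.emod_lt_of_pos _ hpz
  have hc : N - ((N * u) % e) * D = e * (N * v + (N * u / e) * D) := by
    have := Int.emod_add_mul_ediv (N * u) e
    have h1 : (N * u) % e = N * u - e * (N * u / e) := by linarith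
    rw [h1]
    linear_combination (-N) * huv
  generalize (N * u) % e = m at *
  generalize (N * v + (N * u / e) * D) = c at *
  refine ⟨m, c, hm0, hm1, hc, ?_⟩
  apply ruban_floor_eq p hp
  refine ⟨⟨m, k, rfl⟩, ?_, ?_, ?_⟩
  · have : (0 : ℚ) ≤ m := by exact_mod_cast hm0
    positivity
  · rw [div_lt_iff₀ (by positivity)]
    have : (m : ℚ) < (p : ℚ) ^ (k + 1) := by
      have := hm1
      rw [he] at this
      exact_mod_cast this
    rw [pow_succ] at this
    linarith
  · have hcq : (N : ℚ) - m * D = (p : ℚ) ^ (k + 1) * c := by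
      rw [he] at hc
      exact_mod_cast hc
    have : α - (m : ℚ) / (p : ℚ) ^ k = (p : ℚ) * c / D := by
      rw [heq]
      field_simp
      rw [pow_succ] at hcq
      linear_combination hcq
    rw [this, padicNorm.div, padicNorm.mul]
    have h1 : padicNorm p (D : ℚ) = 1 := (padicNorm.nat_eq_one_iff D).2 hnd
    rw [h1, div_one]
    have h2 := padicNorm.of_int (p := p) c
    have h3 : padicNorm p (p : ℚ) < 1 := padicNorm.padicNorm_p_lt_one_of_prime
    have h4 : 0 ≤ padicNorm p (p : ℚ) := padicNorm.nonneg _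
    nlinarith

lemma ruban_num (e x y m N D' : ℤ) (he : 2 ≤ e) (hm0 : 0 ≤ m) (hm : m < e) (hx : x = |N|)
    (hy : 0 < y) (hle : e * D' ≤ |N - m * y|) :
    (D' < max x y) ∨ (x = y ∧ N < 0) := by
  by_contra! hcon
  obtain ⟨h1, h2⟩ := hcon
  have hxD : x ≤ D' := le_trans (le_max_left _ _) h1
  have hyD : y ≤ D' := le_trans (le_max_right _ _) h1
  rcases le_or_gt 0 N with hN | hN
  · rw [abs_of_nonneg hN] at hx
    subst hx
    rcases abs_cases (x - m * y) with ⟨h, _⟩ | ⟨h, _⟩ <;> rw [h] at hle <;> nlinarith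
  · have hne : x ≠ y := fun h => absurd (h2 h) (not_le.2 hN)
    rw [abs_of_neg hN] at hx
    have h3 : N - m * y < 0 := by nlinarith
    rw [abs_of_neg h3] at hle
    have h4 : m * y ≤ (e - 1) * y := by nlinarith
    have h5 : (e - 1) * y ≤ (e - 1) * D' := by nlinarith
    have h6 : x = D' := by nlinarith
    have h7 : (e - 1) * (D' - y) ≤ 0 := by nlinarith
    have h8 : D' - y ≤ 0 := by nlinarith
    apply hne; omega

lemma ruban_step_s3 (p : ℕ) (hp : p.Prime) (α : ℚ) (N : ℤ) (D k : ℕ)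
    (h : RubanRep p α N D k) (hne : α ≠ rubanFloorQ p α) :
    ∃ (N' : ℤ) (D' k' : ℕ), RubanRep p ((α - rubanFloorQ p α)⁻¹) N' D' k' ∧
      N'.natAbs = D ∧ D' * p ^ k' ≤ N.natAbs + p * D ∧
      (D' < max N.natAbs D ∨ (N.natAbs = D ∧ N < 0)) := by
  obtain ⟨m, c, hm0, hm1, hc, hf⟩ := ruban_floor_rep p hp α N D k h
  obtain ⟨hD, hcop, hnd, heq⟩ := h
  have hp0 : (p : ℚ) ≠ 0 := by exact_mod_cast hp.ne_zero
  have hD0 : (D : ℚ) ≠ 0 := by exact_mod_cast hD.ne'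
  have hc0 : c ≠ 0 := by
    rintro rfl
    apply hne
    rw [hf, heq]
    have : (N : ℚ) = m * D := by
      have : N = m * D := by linarith
      exact_mod_cast this
    rw [this]; field_simp
  obtain ⟨j, D', hD'nd, hD'⟩ := Nat.exists_eq_pow_mul_and_not_dvd
    (Int.natAbs_ne_zero.2 hc0) p hp.ne_one
  have hD'pos : 0 < D' := Nat.pos_of_ne_zero (by rintro rfl; simp at hD'nd)
  have hsg : c = c.sign * (p ^ j * D' : ℕ) := by
    rw [← hD']; exact (Int.sign_mul_natAbs c).symm
  have hs1 : c.sign * c.sign = 1 := by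
    rcases lt_or_gt_of_ne hc0 with h | h
    · rw [Int.sign_eq_neg_one_of_neg h]; rfl
    · rw [Int.sign_eq_one_of_pos h]; rfl
  have hsabs : c.sign.natAbs = 1 := Int.natAbs_sign_of_ne_zero hc0
  generalize c.sign = s at *
  have hs0 : (s : ℚ) ≠ 0 := by
    have : s ≠ 0 := by rintro rfl; simp at hs1
    exact_mod_cast this
  have hD'0 : (D' : ℚ) ≠ 0 := by exact_mod_cast hD'pos.ne'
  have habs : (N - m * D).natAbs = p ^ (k + 1) * (p ^ j * D') := by
    rw [hc, Int.natAbs_mul, hD', Int.natAbs_pow, Int.natAbs_natCast]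
  have habs' : |N - m * D| = (p : ℤ) ^ (k + 1) * ((p : ℤ) ^ j * D') := by
    rw [Int.abs_eq_natAbs, habs]; push_cast; ring
  refine ⟨s * D, D', j + 1, ⟨hD'pos, ?_, hD'nd, ?_⟩, ?_, ?_, ?_⟩
  · have h1 : IsCoprime (N - m * D) (D : ℤ) := by
      obtain ⟨u, v, huv⟩ := hcop
      exact ⟨u, v + u * m, by linear_combination huv⟩
    have h2 : IsCoprime (D' : ℤ) (D : ℤ) := by
      refine IsCoprime.of_isCoprime_of_dvd_left h1 ?_
      rw [hc, hsg]
      push_cast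
      exact ⟨(p : ℤ) ^ (k + 1) * (s * p ^ j), by ring⟩
    have h3 : IsCoprime s (D' : ℤ) := ⟨s, 0, by linear_combination hs1⟩
    exact IsCoprime.mul_left h3 h2.symm
  · have hs1q : (s : ℚ) * s = 1 := by exact_mod_cast hs1
    have hcq : (N : ℚ) - m * D = (p : ℚ) ^ (k + 1) * (s * (p ^ j * D')) := by
      have : N - m * D = (p : ℤ) ^ (k + 1) * (s * (p ^ j * D')) := by
        rw [hc, hsg]; push_cast; ring
      exact_mod_cast this
    have e1 : α - rubanFloorQ p α = (p : ℚ) ^ (j + 1) * D' * s / D := by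
      rw [hf, heq]
      field_simp
      rw [pow_succ] at hcq ⊢
      linear_combination hcq
    rw [e1]
    push_cast
    rw [inv_div]
    rw [div_eq_div_iff (by positivity) (by positivity)]
    linear_combination (-(D : ℚ) * D' * p ^ (j + 1)) * hs1q
  · rw [Int.natAbs_mul, hsabs]; simp
  · have hppos : 0 < p ^ k := pow_pos hp.pos k
    apply Nat.le_of_mul_le_mul_left _ hppos
    have h1 : (N - m * D).natAbs ≤ N.natAbs + m.natAbs * D := by
      have := Int.natAbs_sub_le N (m * D)
      rwa [Int.natAbs_mul, Int.natAbs_natCast] at this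
    have h2 : m.natAbs ≤ p ^ (k + 1) := by
      zify
      rw [abs_of_nonneg hm0]
      exact hm1.le
    have h3 : m.natAbs * D ≤ p ^ (k + 1) * D := Nat.mul_le_mul_right _ h2
    have h4 : N.natAbs ≤ p ^ k * N.natAbs := Nat.le_mul_of_pos_left _ hppos
    calc p ^ k * (D' * p ^ (j + 1)) = (N - m * D).natAbs := by rw [habs]; ring
      _ ≤ p ^ k * N.natAbs + p ^ (k + 1) * D := by omega
      _ = _ := by ring
  · have hp2 : (2 : ℤ) ≤ p := by exact_mod_cast hp.two_le
    have he : (2 : ℤ) ≤ (p : ℤ) ^ (k + 1) := by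
      calc (2 : ℤ) ≤ p := hp2
        _ ≤ (p : ℤ) ^ (k + 1) := le_self_pow₀ (by linarith) (by omega)
    have hj : (1 : ℤ) ≤ (p : ℤ) ^ j := one_le_pow₀ (by linarith)
    have hle : (p : ℤ) ^ (k + 1) * (D' : ℤ) ≤ |N - m * D| := by
      rw [habs']
      have : (D' : ℤ) ≤ (p : ℤ) ^ j * D' := by
        have : (0 : ℤ) ≤ D' := by positivity
        nlinarith
      exact mul_le_mul_of_nonneg_left this (by linarith)
    have := ruban_num _ (N.natAbs : ℤ) D m N D' he hm0 hm1 (Int.abs_eq_natAbs N).symm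
      (by exact_mod_cast hD) hle
    rcases this with h | ⟨h, h'⟩
    · left; exact_mod_cast h
    · right; exact ⟨by exact_mod_cast h, h'⟩

lemma ruban_floor_fixed (p : ℕ) (hp : p.Prime) (k : ℕ) :
    rubanFloorQ p (-1 / (p : ℚ) ^ k) = (p : ℚ) - 1 / (p : ℚ) ^ k := by
  have : Fact p.Prime := ⟨hp⟩
  have hp2 : (2 : ℚ) ≤ p := by exact_mod_cast hp.two_le
  have hp0 : (p : ℚ) ≠ 0 := by exact_mod_cast hp.ne_zero
  apply ruban_floor_eq p hp
  have h1 : (1 : ℚ) ≤ (p : ℚ) ^ k := one_le_pow₀ (by linarith)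
  have h2 : 1 / (p : ℚ) ^ k ≤ 1 := by rw [div_le_one (by linarith)]; exact h1
  have h3 : 0 < 1 / (p : ℚ) ^ k := by positivity
  refine ⟨⟨(p : ℤ) ^ (k + 1) - 1, k, ?_⟩, by linarith, by linarith, ?_⟩
  · push_cast; field_simp; ring
  · have : -1 / (p : ℚ) ^ k - ((p : ℚ) - 1 / (p : ℚ) ^ k) = -(p : ℚ) := by ring
    rw [this, padicNorm.neg]
    exact padicNorm.padicNorm_p_lt_one_of_prime

lemma ruban_next_fixed (p : ℕ) (hp : p.Prime) (k : ℕ) :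
    (-1 / (p : ℚ) ^ k - rubanFloorQ p (-1 / (p : ℚ) ^ k))⁻¹ = -1 / (p : ℚ) := by
  rw [ruban_floor_fixed p hp]
  have : -1 / (p : ℚ) ^ k - ((p : ℚ) - 1 / (p : ℚ) ^ k) = -(p : ℚ) := by ring
  rw [this, inv_neg, neg_div, one_div]

lemma ruban_inv (p : ℕ) (hp : p.Prime) (α : ℚ) (hnt : ¬ RubanTerminatesQ p α) (n : ℕ) :
    rubanCQQ p α n = -1 / (p : ℚ) ∨ ∃ (N : ℤ) (D k : ℕ), RubanRep p (rubanCQQ p α n) N D k ∧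
      2 * N.natAbs + n ≤ 2 * max α.num.natAbs α.den + 1 ∧
      2 * D + n ≤ 2 * max α.num.natAbs α.den ∧
      D * p ^ k ≤ (p + 1) * max α.num.natAbs α.den := by
  set H := max α.num.natAbs α.den with hH
  have hHd : α.den ≤ H := le_max_right _ _
  have hHn : α.num.natAbs ≤ H := le_max_left _ _
  induction n with
  | zero =>
    right
    obtain ⟨k, D, hnd, hD⟩ := Nat.exists_eq_pow_mul_and_not_dvd α.den_nz p hp.ne_one
    have hDpos : 0 < D := Nat.pos_of_ne_zero (by rintro rfl; simp at hnd)
    have hDle : D ≤ α.den := by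
      rw [hD]; exact Nat.le_mul_of_pos_left _ (pow_pos hp.pos k)
    refine ⟨α.num, D, k, ⟨hDpos, ?_, hnd, ?_⟩, by omega, by omega, ?_⟩
    · have h1 : IsCoprime α.num (α.den : ℤ) := by
        rw [Int.isCoprime_iff_gcd_eq_one]
        exact α.reduced
      refine IsCoprime.of_isCoprime_of_dvd_right h1 ?_
      rw [hD]; push_cast
      exact ⟨_, mul_comm _ _⟩
    · have h2 : (α.den : ℚ) = D * (p : ℚ) ^ k := by rw [hD]; push_cast; ring
      rw [← h2]
      exact (Rat.num_div_den α).symm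
    · rw [mul_comm, ← hD]
      nlinarith
  | succ n ih =>
    have hne : rubanCQQ p α n ≠ rubanFloorQ p (rubanCQQ p α n) := fun h => hnt ⟨n, h⟩
    have hstep : rubanCQQ p α (n + 1) =
      (rubanCQQ p α n - rubanFloorQ p (rubanCQQ p α n))⁻¹ := rfl
    rw [hstep]
    rcases ih with ih | ⟨N, D, k, hrep, h1, h2, h3⟩
    · left
      rw [ih]
      have := ruban_next_fixed p hp 1
      rwa [pow_one] at this
    · obtain ⟨N', D', k', hrep', hN', hh, hcase⟩ := ruban_step_s3 p hp _ N D k hrep hne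
      rcases hcase with hlt | ⟨hxy, hneg⟩
      · right
        refine ⟨N', D', k', hrep', by omega, by omega, ?_⟩
        have ha : N.natAbs ≤ H := by omega
        have hb : D ≤ H := by omega
        nlinarith
      · left
        have hD1 : D = 1 := by
          have hc := hrep.cop
          rw [Int.isCoprime_iff_gcd_eq_one, Int.gcd, hxy] at hc
          simpa using hc
        have hN1 : N = -1 := by omega
        have he := hrep.eq
        rw [hD1, hN1] at he
        push_cast at he
        rw [one_mul] at he
        rw [he]
        exact ruban_next_fixed p hp k

lemma ruban_height_le (α : ℚ) (N : ℤ) (E : ℕ) (hE : 0 < E) (h : α = (N : ℚ) / (E : ℚ)) (B : ℕ)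
    (hN : N.natAbs ≤ B) (hEB : E ≤ B) : ratHeight α ≤ B := by
  have hd : α.den ∣ E := by
    have := Rat.den_dvd N E
    rw [h, ← Rat.intCast_div_eq_divInt] at * 
    exact_mod_cast this
  have hn : N ≠ 0 → α.num ∣ N := by
    intro hN0
    rw [h]
    have := Rat.num_dvd N (b := (E : ℤ)) (by exact_mod_cast hE.ne')
    rw [Rat.divInt_eq_div] at this
    exact_mod_cast this
  unfold ratHeight
  apply max_le
  · have : α.num.natAbs ≤ B := by
      by_cases hN0 : N = 0
      · rw [h, hN0]; simp
      · exact le_trans (Nat.le_of_dvd (by omega) (Int.natAbs_dvd_natAbs.2 (hn hN0))) hN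
    have h' : |α.num| ≤ (B : ℤ) := by rw [Int.abs_eq_natAbs]; exact_mod_cast this
    exact_mod_cast h'
  · exact_mod_cast le_trans (Nat.le_of_dvd hE hd) hEB

lemma ruban_height_eq (α : ℚ) : ratHeight α = (max α.num.natAbs α.den : ℕ) := by
  unfold ratHeight
  push_cast
  rw [Nat.cast_natAbs]
  push_cast
  rfl

/-- If the Ruban continued fraction expansion of a rational `α` does not
terminate, then all partial quotients `a_n` with `n ≥ 32 ℓ H(α)^2` equal `ℓ - 1/ℓ`, and
every complete quotient has height at most `4 ℓ H(α)`. -/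
theorem ruban_rational_quantified
    (ℓ : ℕ) (hℓ : ℓ.Prime) (α : ℚ) (hnt : ¬ RubanTerminatesQ ℓ α) :
    (∀ n : ℕ, 32 * (ℓ : ℚ) * ratHeight α ^ 2 ≤ (n : ℚ) →
      rubanPQQ ℓ α n = (ℓ : ℚ) - 1 / (ℓ : ℚ)) ∧
    ∀ n : ℕ, ratHeight (rubanCQQ ℓ α n) ≤ 4 * (ℓ : ℚ) * ratHeight α := by
  have hH := ruban_height_eq α
  have hHpos : 1 ≤ max α.num.natAbs α.den := le_trans α.pos (le_max_right _ _)
  have hinv := ruban_inv ℓ hℓ α hnt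
  rw [hH]
  generalize max α.num.natAbs α.den = H at *
  have hp2 := hℓ.two_le
  constructor
  · intro n hn
    have hn' : 32 * ℓ * H ^ 2 ≤ n := by exact_mod_cast hn
    have hn2 : 2 * H ≤ n := by nlinarith [Nat.mul_le_mul hp2 (Nat.mul_le_mul hHpos (le_refl H))]
    rcases hinv n with h | ⟨N, D, k, hrep, -, h2, -⟩
    · unfold rubanPQQ
      rw [h]
      have := ruban_floor_fixed ℓ hℓ 1
      rwa [pow_one] at this
    · have := hrep.pos
      omega
  · intro n
    have key : ratHeight (rubanCQQ ℓ α n) ≤ ((4 * ℓ * H : ℕ) : ℚ) := by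
      rcases hinv n with h | ⟨N, D, k, hrep, h1, h2, h3⟩
      · refine ruban_height_le _ (-1) ℓ hℓ.pos (by rw [h]; simp) _ ?_ ?_
        · simp; nlinarith
        · nlinarith
      · refine ruban_height_le _ N (D * ℓ ^ k) (Nat.mul_pos hrep.pos (pow_pos hℓ.pos k))
          (by rw [hrep.eq]; push_cast; rfl) _ ?_ ?_
        · have : N.natAbs ≤ H := by omega
          nlinarith
        · nlinarith
    exact_mod_cast key
end

section
/- Let (a_n)_{n≥0} be a sequence of real numbers with a_n > 0 for all n ≥ 1, and let p_n, q_n be defined by the continued fraction recurrences. Then the sequence of convergents (p_n/q_n) converges in ℝ if and only if the series ∑_n a_n diverges, and this holds if and only if the sequence (q_n) is unbounded. -/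
open Filter Topology

/-- Continued fraction numerators. -/
def cfNum {R : Type*} [CommRing R] (a : ℕ → R) : ℕ → R
  | 0 => 1
  | 1 => a 0
  | n + 2 => a (n + 1) * cfNum a (n + 1) + cfNum a n

/-- Continued fraction denominators. -/
def cfDen {R : Type*} [CommRing R] (a : ℕ → R) : ℕ → R
  | 0 => 0
  | 1 => 1
  | n + 2 => a (n + 1) * cfDen a (n + 1) + cfDen a n

lemma cf_den_lower (a : ℕ → ℝ) (hpos : ∀ n, 1 ≤ n → 0 < a n) :
    ∀ n, 0 ≤ cfDen a n ∧ min 1 (a 1) ≤ cfDen a (n + 1) ∧ min 1 (a 1) ≤ cfDen a (n + 2) := by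
  have hc : 0 < min 1 (a 1) := lt_min one_pos (hpos 1 le_rfl)
  intro n
  induction n with
  | zero => refine ⟨?_, ?_, ?_⟩ <;> simp [cfDen]
  | succ k ih =>
    obtain ⟨h0, h1, h2⟩ := ih
    refine ⟨hc.le.trans h1, h2, ?_⟩
    have h3 := mul_nonneg (hpos (k + 2) (by omega)).le (hc.le.trans h2)
    have : cfDen a (k + 3) = a (k + 2) * cfDen a (k + 2) + cfDen a (k + 1) := rfl
    show _ ≤ cfDen a (k + 3)
    linarith

lemma cf_den_upper (a : ℕ → ℝ) (hpos : ∀ n, 1 ≤ n → 0 < a n) (n : ℕ) :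
    cfDen a n ≤ Real.exp (∑ i ∈ Finset.range n, a (i + 1)) ∧
    cfDen a (n + 1) ≤ Real.exp (∑ i ∈ Finset.range n, a (i + 1)) := by
  induction n with
  | zero => simp [cfDen]
  | succ k ih =>
    obtain ⟨h0, h1⟩ := ih
    have ha := hpos (k + 1) (by omega)
    rw [Finset.sum_range_succ, Real.exp_add]
    set E := Real.exp (∑ i ∈ Finset.range k, a (i + 1))
    have hE : 0 < E := Real.exp_pos _
    have h2 := mul_le_mul_of_nonneg_left (Real.add_one_le_exp (a (k + 1))) hE.le
    have h3 := mul_le_mul_of_nonneg_left h1 ha.le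
    have h4 := mul_pos hE ha
    have h5 : cfDen a (k + 2) = a (k + 1) * cfDen a (k + 1) + cfDen a k := rfl
    refine ⟨by nlinarith, ?_⟩
    show cfDen a (k + 2) ≤ _
    nlinarith

lemma cf_det (a : ℕ → ℝ) (n : ℕ) :
    cfNum a (n + 1) * cfDen a n - cfNum a n * cfDen a (n + 1) = (-1) ^ (n + 1) := by
  induction n with
  | zero => simp [cfNum, cfDen]
  | succ k ih =>
    have h5 : cfDen a (k + 2) = a (k + 1) * cfDen a (k + 1) + cfDen a k := rfl
    have h6 : cfNum a (k + 2) = a (k + 1) * cfNum a (k + 1) + cfNum a k := rfl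
    rw [pow_succ, ← ih]
    show cfNum a (k + 2) * _ - _ * cfDen a (k + 2) = _
    rw [h5, h6]; ring

lemma cf_diff (a : ℕ → ℝ) (hpos : ∀ n, 1 ≤ n → 0 < a n) (n : ℕ) :
    cfNum a (n + 2) / cfDen a (n + 2) - cfNum a (n + 1) / cfDen a (n + 1)
      = (-1) ^ n * (1 / (cfDen a (n + 1) * cfDen a (n + 2))) := by
  have hc : 0 < min 1 (a 1) := lt_min one_pos (hpos 1 le_rfl)
  obtain ⟨-, h1, h2⟩ := cf_den_lower a hpos n
  have h1' := (hc.trans_le h1).ne'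
  have h2' := (hc.trans_le h2).ne'
  have h := cf_det a (n + 1)
  have e : ((-1 : ℝ)) ^ (n + 1 + 1) = (-1) ^ n := by ring
  rw [e] at h
  rw [← h]
  field_simp

lemma cf_summable_of_bdd (a : ℕ → ℝ) (hpos : ∀ n, 1 ≤ n → 0 < a n)
    (hb : BddAbove (Set.range (cfDen a))) : Summable a := by
  have hc : 0 < min 1 (a 1) := lt_min one_pos (hpos 1 le_rfl)
  obtain ⟨B, hB⟩ := hb
  have hB' : ∀ n, cfDen a n ≤ B := fun n => hB ⟨n, rfl⟩
  rw [← summable_nat_add_iff 1]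
  have key : ∀ n, min 1 (a 1) * ∑ i ∈ Finset.range n, a (i + 1)
      ≤ cfDen a n + cfDen a (n + 1) := by
    intro n
    induction n with
    | zero => simp [cfDen]
    | succ k ih =>
      rw [Finset.sum_range_succ, mul_add]
      have h5 : cfDen a (k + 1 + 1) = a (k + 1) * cfDen a (k + 1) + cfDen a k := rfl
      have := mul_le_mul_of_nonneg_left (cf_den_lower a hpos k).2.1 (hpos (k + 1) (by omega)).le
      rw [h5]; linarith
  refine summable_of_sum_range_le (c := (2 * B) / min 1 (a 1))
    (fun n => (hpos (n + 1) (by omega)).le) (fun n => ?_)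
  rw [le_div_iff₀ hc]
  linarith [key n, hB' n, hB' (n + 1)]

lemma cf_bdd_of_summable (a : ℕ → ℝ) (hpos : ∀ n, 1 ≤ n → 0 < a n)
    (hs : Summable a) : BddAbove (Set.range (cfDen a)) := by
  rw [← summable_nat_add_iff 1] at hs
  refine ⟨Real.exp (∑' i, a (i + 1)), ?_⟩
  rintro _ ⟨n, rfl⟩
  refine (cf_den_upper a hpos n).1.trans (Real.exp_le_exp.2 ?_)
  exact hs.sum_le_tsum _ (fun i _ => (hpos (i + 1) (by omega)).le)

lemma cf_conv_of_not_summable (a : ℕ → ℝ) (hpos : ∀ n, 1 ≤ n → 0 < a n)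
    (hs : ¬ Summable a) :
    ∃ L : ℝ, Tendsto (fun n : ℕ => cfNum a n / cfDen a n) atTop (𝓝 L) := by
  have hc : 0 < min 1 (a 1) := lt_min one_pos (hpos 1 le_rfl)
  have step : ∀ n, cfDen a (n + 1) * cfDen a (n + 2) + min 1 (a 1) ^ 2 * a (n + 2)
      ≤ cfDen a (n + 2) * cfDen a (n + 3) := by
    intro n
    have h5 : cfDen a (n + 3) = a (n + 2) * cfDen a (n + 2) + cfDen a (n + 1) := rfl
    have h := mul_le_mul_of_nonneg_left
      (pow_le_pow_left₀ hc.le (cf_den_lower a hpos n).2.2 2) (hpos (n + 2) (by omega)).le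
    rw [h5]; nlinarith
  have hppos : ∀ n, 0 < cfDen a (n + 1) * cfDen a (n + 2) := fun n =>
    mul_pos (hc.trans_le (cf_den_lower a hpos n).2.1) (hc.trans_le (cf_den_lower a hpos n).2.2)
  have key : ∀ n, min 1 (a 1) ^ 2 * ∑ i ∈ Finset.range n, a (i + 2)
      ≤ cfDen a (n + 1) * cfDen a (n + 2) := by
    intro n
    induction n with
    | zero => simpa using (hppos 0).le
    | succ k ih =>
      rw [Finset.sum_range_succ, mul_add]
      exact (add_le_add_left ih _).trans (step k)
  have hdiv : Tendsto (fun n => ∑ i ∈ Finset.range n, a (i + 2)) atTop atTop := by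
    rw [← summable_nat_add_iff 2] at hs
    exact (not_summable_iff_tendsto_nat_atTop_of_nonneg
      (fun n => (hpos (n + 2) (by omega)).le)).1 hs
  have hq : Tendsto (fun n => cfDen a (n + 1) * cfDen a (n + 2)) atTop atTop :=
    tendsto_atTop_mono key (hdiv.const_mul_atTop (by positivity))
  have h0 : Tendsto (fun n => 1 / (cfDen a (n + 1) * cfDen a (n + 2))) atTop (𝓝 0) :=
    hq.const_div_atTop 1
  have hanti : Antitone (fun n => 1 / (cfDen a (n + 1) * cfDen a (n + 2))) := by
    refine antitone_nat_of_succ_le fun n => ?_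
    refine one_div_le_one_div_of_le (hppos n) ?_
    have := mul_nonneg (sq_nonneg (min 1 (a 1))) (hpos (n + 2) (by omega)).le
    show _ ≤ cfDen a (n + 2) * cfDen a (n + 3)
    linarith [step n]
  obtain ⟨l, hl⟩ := hanti.tendsto_alternating_series_of_tendsto_zero h0
  refine ⟨l + cfNum a 1 / cfDen a 1, ?_⟩
  rw [← tendsto_add_atTop_iff_nat 1]
  refine (hl.add_const _).congr fun n => ?_
  rw [Finset.sum_congr rfl (fun i _ => (cf_diff a hpos i).symm),
    Finset.sum_range_sub (fun i => cfNum a (i + 1) / cfDen a (i + 1))]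
  simp

lemma cf_not_bdd_of_conv (a : ℕ → ℝ) (hpos : ∀ n, 1 ≤ n → 0 < a n)
    (h : ∃ L : ℝ, Tendsto (fun n : ℕ => cfNum a n / cfDen a n) atTop (𝓝 L)) :
    ¬ BddAbove (Set.range (cfDen a)) := by
  have hc : 0 < min 1 (a 1) := lt_min one_pos (hpos 1 le_rfl)
  rintro ⟨B, hB⟩
  have hB' : ∀ n, cfDen a n ≤ B := fun n => hB ⟨n, rfl⟩
  obtain ⟨L, hL⟩ := h
  have h1 := ((tendsto_add_atTop_iff_nat 2).2 hL).sub ((tendsto_add_atTop_iff_nat 1).2 hL)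
  have h2 := h1.abs
  rw [sub_self, abs_zero] at h2
  have hBpos : 0 < B := hc.trans_le ((cf_den_lower a hpos 0).2.1.trans (hB' _))
  have h3 : 1 / (B * B) ≤ 0 := by
    refine ge_of_tendsto' h2 fun n => ?_
    obtain ⟨-, l1, l2⟩ := cf_den_lower a hpos n
    have p1 := hc.trans_le l1
    have p2 := hc.trans_le l2
    rw [cf_diff a hpos n, abs_mul, abs_pow, abs_neg, abs_one, one_pow, one_mul,
      abs_of_pos (by positivity)]
    exact one_div_le_one_div_of_le (mul_pos p1 p2) (mul_le_mul (hB' _) (hB' _) p2.le hBpos.le)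
  have : 0 < 1 / (B * B) := by positivity
  linarith

/-- For a continued fraction with real partial quotients which are positive
from index `1` on, the convergents converge in `ℝ` iff `∑ aₙ` diverges, iff the `qₙ` are
unbounded. -/
theorem cf_converges_iff_sum_diverges_iff_den_unbounded
    (a : ℕ → ℝ) (hpos : ∀ n, 1 ≤ n → 0 < a n) :
    ((∃ L : ℝ, Tendsto (fun n : ℕ => cfNum a n / cfDen a n) atTop (𝓝 L)) ↔ ¬ Summable a) ∧
    ((¬ Summable a) ↔ ¬ BddAbove (Set.range (cfDen a))) := by
  exact ⟨⟨fun h hs => cf_not_bdd_of_conv a hpos h (cf_bdd_of_summable a hpos hs),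
    cf_conv_of_not_summable a hpos⟩,
    not_congr ⟨cf_bdd_of_summable a hpos, cf_summable_of_bdd a hpos⟩⟩
end

section
/- Let ℓ be a prime and let α ∈ ℚ be a rational number whose Ruban continued fraction expansion does not terminate. Then the sequence of convergents (p_n/q_n) of the expansion converges in ℝ (with respect to the usual archimedean absolute value). -/
open Filter Topology
open scoped Classical

open Filter Topology

/-- `α = s / (ℓ^k t)` with `ℓ ∤ t`. -/
lemma ruban_rep (p : ℕ) (hp : p.Prime) (α : ℚ) :
    ∃ (s t : ℤ) (k : ℕ), 1 ≤ k ∧ ¬ (p : ℤ) ∣ t ∧ α * ((p : ℚ) ^ k * t) = s := by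
  obtain ⟨k, t, ht, hk⟩ := Nat.exists_eq_pow_mul_and_not_dvd α.den_nz p hp.ne_one
  refine ⟨α.num * p, t, k + 1, by omega, by exact_mod_cast ht, ?_⟩
  have h : ((α.den : ℚ)) = (p : ℚ) ^ k * t := by exact_mod_cast hk
  have h2 : α * α.den = α.num := Rat.mul_den_eq_num α
  push_cast
  rw [← h2, h]; ring

lemma ruban_norm_unit (p : ℕ) [hp : Fact p.Prime] (t : ℤ) (ht : ¬ (p : ℤ) ∣ t) :
    padicNorm p (t : ℚ) = 1 := (padicNorm.int_eq_one_iff t).2 ht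

lemma ruban_norm_p (p : ℕ) [hp : Fact p.Prime] (k : ℕ) :
    padicNorm p ((p : ℚ) ^ k) = ((p : ℚ) ^ k)⁻¹ := by
  have h1 : padicNorm p (p : ℚ) = (p : ℚ)⁻¹ := padicNorm.padicNorm_p_of_prime
  induction k with
  | zero => simp
  | succ k ih => rw [pow_succ, padicNorm.mul, ih, h1, mul_inv]

lemma ruban_floor_exists (p : ℕ) (hp : p.Prime) (α : ℚ) : ∃ a, IsRubanFloorQ p α a := by
  have : Fact p.Prime := ⟨hp⟩
  obtain ⟨s, t, k, hk, ht, h⟩ := ruban_rep p hp α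
  have hp0 : (0 : ℚ) < p := by exact_mod_cast hp.pos
  have hpi : (0 : ℤ) < (p : ℤ) ^ (k + 1) := by
    have : (0 : ℤ) < p := by exact_mod_cast hp.pos
    positivity
  have hcop : IsCoprime t ((p : ℤ) ^ (k + 1)) :=
    (((Nat.prime_iff_prime_int.1 hp).coprime_iff_not_dvd.2 ht).symm).pow_right
  obtain ⟨u, v, huv⟩ := hcop
  set m : ℤ := (u * s) % (p : ℤ) ^ (k + 1) with hm
  have hm0 : 0 ≤ m := Int.emod_nonneg _ hpi.ne'
  have hm1 : m < (p : ℤ) ^ (k + 1) := Int.emod_lt_of_pos _ hpi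
  have hdvd : (p : ℤ) ^ (k + 1) ∣ s - m * t := by
    have h1 := Int.emod_add_mul_ediv (u * s) ((p : ℤ) ^ (k + 1))
    rw [← hm] at h1
    refine ⟨v * s + ((u * s) / (p : ℤ) ^ (k + 1)) * t, ?_⟩
    linear_combination (-t) * h1 - s * huv
  obtain ⟨w, hw⟩ := hdvd
  have ht0 : (t : ℚ) ≠ 0 := by
    intro h0
    have : t = 0 := by exact_mod_cast h0
    exact ht (this ▸ dvd_zero _)
  have hpk : (0 : ℚ) < (p : ℚ) ^ k := by positivity
  refine ⟨m / (p : ℚ) ^ k, ⟨m, k, rfl⟩, ?_, ?_, ?_⟩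
  · have : (0 : ℚ) ≤ m := by exact_mod_cast hm0
    positivity
  · rw [div_lt_iff₀ hpk]
    have : (m : ℚ) < (p : ℚ) ^ (k + 1) := by exact_mod_cast hm1
    rw [pow_succ] at this
    linarith
  · have hwq : (s : ℚ) - m * t = (p : ℚ) ^ (k + 1) * w := by exact_mod_cast hw
    have e : (α - m / (p : ℚ) ^ k) * t = p * w := by
      have : (α - m / (p : ℚ) ^ k) * t * (p : ℚ) ^ k = p * w * (p : ℚ) ^ k := by
        rw [pow_succ, ← h] at hwq
        field_simp
        linear_combination hwq
      exact mul_right_cancel₀ hpk.ne' this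
    have e2 := congrArg (padicNorm p) e
    rw [padicNorm.mul, padicNorm.mul, ruban_norm_unit p t ht, mul_one,
      padicNorm.padicNorm_p_of_prime] at e2
    rw [e2]
    have h1 : padicNorm p (w : ℚ) ≤ 1 := padicNorm.of_int w
    have h2 : (p : ℚ)⁻¹ < 1 := inv_lt_one_of_one_lt₀ (by exact_mod_cast hp.one_lt)
    have h3 : (0 : ℚ) < (p : ℚ)⁻¹ := by positivity
    nlinarith

lemma ruban_floor_spec (p : ℕ) (hp : p.Prime) (α : ℚ) :
    IsRubanFloorQ p α (rubanFloorQ p α) := by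
  have h := ruban_floor_exists p hp α
  unfold rubanFloorQ
  rw [dif_pos h]
  exact h.choose_spec

/-- One descent step. -/
lemma ruban_step_s9 (p : ℕ) (hp : p.Prime) (α a : ℚ) (ha : IsRubanFloorQ p α a) (hne : α ≠ a)
    (hsmall : a ≤ 1 / 2) (s t : ℤ) (k : ℕ) (hk : 1 ≤ k) (ht : ¬ (p : ℤ) ∣ t)
    (h : α * ((p : ℚ) ^ k * t) = s) :
    ∃ (s' : ℤ) (k' : ℕ), 1 ≤ k' ∧ ¬ (p : ℤ) ∣ s' ∧ (α - a)⁻¹ * ((p : ℚ) ^ k' * s') = t ∧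
      4 * |s'| ≤ |s| + |t| := by
  have : Fact p.Prime := ⟨hp⟩
  obtain ⟨⟨m, i, hmi⟩, ha0, -, hβ⟩ := ha
  have hp0 : (0 : ℚ) < p := by exact_mod_cast hp.pos
  have hp2 : (2 : ℚ) ≤ p := by exact_mod_cast hp.two_le
  have hpk : (0 : ℚ) < (p : ℚ) ^ k := by positivity
  have hpi : (0 : ℚ) < (p : ℚ) ^ i := by positivity
  have ht0 : (t : ℚ) ≠ 0 := by
    intro h0
    have : t = 0 := by exact_mod_cast h0
    exact ht (this ▸ dvd_zero _)
  have hnt := ruban_norm_unit p t ht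
  have hnpk : padicNorm p ((p : ℚ) ^ k) ≤ 1 := by
    have := padicNorm.of_int (p := p) ((p : ℤ) ^ k)
    push_cast at this; exact this
  -- integrality of p^k * a
  have hb : ∃ b : ℤ, (p : ℚ) ^ k * a = b := by
    have h1 : padicNorm p ((p : ℚ) ^ k * α) ≤ 1 := by
      have e := congrArg (padicNorm p) (show ((p : ℚ) ^ k * α) * t = s by rw [← h]; ring)
      rw [padicNorm.mul, hnt, mul_one] at e
      rw [e]; exact padicNorm.of_int s
    have h2 : padicNorm p ((p : ℚ) ^ k * (α - a)) ≤ 1 := by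
      rw [padicNorm.mul]
      exact mul_le_one₀ hnpk (padicNorm.nonneg _) hβ.le
    have h3 : padicNorm p ((p : ℚ) ^ k * a) ≤ 1 := by
      have e : (p : ℚ) ^ k * a = (p : ℚ) ^ k * α - (p : ℚ) ^ k * (α - a) := by ring
      rw [e]
      exact padicNorm.sub.trans (max_le h1 h2)
    have h4 : (p : ℚ) ^ k * a * (p : ℚ) ^ i = (((p : ℤ) ^ k * m : ℤ) : ℚ) := by
      rw [hmi]; push_cast; field_simp
    have h5 : ((p ^ i : ℕ) : ℤ) ∣ (p : ℤ) ^ k * m := by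
      rw [padicNorm.dvd_iff_norm_le, ← h4, padicNorm.mul, ruban_norm_p, zpow_neg, zpow_natCast]
      have : (0 : ℚ) < ((p : ℚ) ^ i)⁻¹ := by positivity
      nlinarith
    obtain ⟨b, hb⟩ := h5
    refine ⟨b, mul_right_cancel₀ hpi.ne' ?_⟩
    rw [h4, hb]; push_cast; ring
  obtain ⟨b, hb⟩ := hb
  have hβ0 : α - a ≠ 0 := sub_ne_zero.2 hne
  have hkey : ((s - b * t : ℤ) : ℚ) = (p : ℚ) ^ k * t * (α - a) := by
    push_cast; rw [← hb, ← h]; ring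
  have hD0 : s - b * t ≠ 0 := by
    intro h0
    rw [h0] at hkey
    have : (p : ℚ) ^ k * t * (α - a) ≠ 0 := mul_ne_zero (mul_ne_zero hpk.ne' ht0) hβ0
    exact this (by rw [← hkey]; simp)
  have hfin : FiniteMultiplicity (p : ℤ) (s - b * t) :=
    Int.finiteMultiplicity_iff.2 ⟨by simpa using hp.ne_one, hD0⟩
  obtain ⟨s', hs', hns'⟩ := hfin.exists_eq_pow_mul_and_not_dvd
  generalize multiplicity (p : ℤ) (s - b * t) = j at hs'
  have hs'q : ((s - b * t : ℤ) : ℚ) = (p : ℚ) ^ j * s' := by rw [hs']; push_cast; rfl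
  have hjk : k < j := by
    have e := congrArg (padicNorm p) (hs'q.symm.trans hkey)
    rw [padicNorm.mul, padicNorm.mul, padicNorm.mul, hnt, ruban_norm_unit p s' hns',
      ruban_norm_p, ruban_norm_p, mul_one, mul_one] at e
    have h1 : ((p : ℚ) ^ j)⁻¹ < ((p : ℚ) ^ k)⁻¹ := by
      rw [e]
      have : (0 : ℚ) < ((p : ℚ) ^ k)⁻¹ := by positivity
      nlinarith
    have h2 : (p : ℚ) ^ k < (p : ℚ) ^ j := (inv_lt_inv₀ (by positivity) hpk).1 h1
    exact (pow_lt_pow_iff_right₀ (by linarith)).1 h2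
  obtain ⟨k', rfl⟩ : ∃ k', j = k + k' := ⟨j - k, by omega⟩
  refine ⟨s', k', by omega, hns', ?_, ?_⟩
  · have e : (p : ℚ) ^ k * ((p : ℚ) ^ k' * s') = (p : ℚ) ^ k * (t * (α - a)) := by
      rw [← mul_assoc, ← pow_add, ← hs'q, hkey]; ring
    rw [mul_left_cancel₀ hpk.ne' e]
    field_simp
  · have e := congrArg abs hs'q
    rw [abs_mul, abs_of_pos (show (0 : ℚ) < (p : ℚ) ^ (k + k') by positivity), pow_add] at e
    push_cast at e
    have hk2 : (2 : ℚ) ≤ (p : ℚ) ^ k := hp2.trans (le_self_pow₀ (by linarith) (by omega))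
    have hk2' : (2 : ℚ) ≤ (p : ℚ) ^ k' := hp2.trans (le_self_pow₀ (by linarith) (by omega))
    have h1 : |(s : ℚ) - b * t| ≤ |(s : ℚ)| + (p : ℚ) ^ k * (1 / 2) * |(t : ℚ)| := by
      refine (abs_sub _ _).trans ?_
      rw [abs_mul, ← hb, abs_of_nonneg (by positivity : 0 ≤ (p : ℚ) ^ k * a)]
      gcongr
    have hs0 : (0 : ℚ) ≤ |(s' : ℚ)| := abs_nonneg _
    have hss : (0 : ℚ) ≤ |(s : ℚ)| := abs_nonneg _
    have h2 : (p : ℚ) ^ k * (2 * |(s' : ℚ)|) ≤ (p : ℚ) ^ k * ((|(s : ℚ)| + |(t : ℚ)|) / 2) := by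
      have : (p : ℚ) ^ k * (2 * |(s' : ℚ)|) ≤ (p : ℚ) ^ k * ((p : ℚ) ^ k' * |(s' : ℚ)|) := by
        gcongr
      nlinarith
    have h3 := le_of_mul_le_mul_left h2 hpk
    have h4 : 4 * |(s' : ℚ)| ≤ |(s : ℚ)| + |(t : ℚ)| := by linarith
    exact_mod_cast h4

lemma ruban_descent (p : ℕ) (hp : p.Prime) (α : ℚ) (hnt : ¬ RubanTerminatesQ p α) (N : ℕ)
    (hN : ∀ n, N ≤ n → rubanPQQ p α n ≤ 1 / 2) (B : ℕ) :
    ∀ (n : ℕ) (s t : ℤ) (k : ℕ), N ≤ n → 1 ≤ k → ¬ (p : ℤ) ∣ t →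
      rubanCQQ p α n * ((p : ℚ) ^ k * t) = s → |s| + 2 * |t| ≤ B → False := by
  induction B with
  | zero =>
    intro n s t k _ _ ht _ hB
    have h1 := abs_nonneg s
    have h2 : 0 < |t| := abs_pos.2 (by rintro rfl; exact ht (dvd_zero _))
    push_cast at hB
    omega
  | succ B ih =>
    intro n s t k hn hk ht h hB
    obtain ⟨s', k', hk', hs', e, hle⟩ := ruban_step_s9 p hp (rubanCQQ p α n) (rubanPQQ p α n)
      (ruban_floor_spec p hp _) (fun h => hnt ⟨n, h⟩) (hN n hn) s t k hk ht h
    refine ih (n + 1) t s' k' (by omega) hk' hs' e ?_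
    have h1 := abs_nonneg s
    have h2 : 0 < |t| := abs_pos.2 (by rintro rfl; exact ht (dvd_zero _))
    push_cast at hB
    omega

lemma ruban_frequently (p : ℕ) (hp : p.Prime) (α : ℚ) (hnt : ¬ RubanTerminatesQ p α) (N : ℕ) :
    ∃ n, N ≤ n ∧ 1 / 2 < rubanPQQ p α n := by
  by_contra! hN
  obtain ⟨s, t, k, hk, ht, h⟩ := ruban_rep p hp (rubanCQQ p α N)
  refine ruban_descent p hp α hnt N hN (|s| + 2 * |t|).toNat N s t k le_rfl hk ht h ?_
  exact Int.self_le_toNat _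

lemma ruban_pos (p : ℕ) (hp : p.Prime) (α : ℚ) (hnt : ¬ RubanTerminatesQ p α) (n : ℕ) :
    0 < rubanPQQ p α (n + 1) := by
  have : Fact p.Prime := ⟨hp⟩
  obtain ⟨-, h0, -, hβ⟩ := ruban_floor_spec p hp (rubanCQQ p α (n + 1))
  refine lt_of_le_of_ne h0 fun h => ?_
  have h' : rubanFloorQ p (rubanCQQ p α (n + 1)) = 0 := h.symm
  rw [h', sub_zero] at hβ
  obtain ⟨-, -, -, hγ⟩ := ruban_floor_spec p hp (rubanCQQ p α n)
  have hne : rubanCQQ p α n - rubanFloorQ p (rubanCQQ p α n) ≠ 0 :=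
    sub_ne_zero.2 fun h => hnt ⟨n, h⟩
  have e : rubanCQQ p α (n + 1) * (rubanCQQ p α n - rubanFloorQ p (rubanCQQ p α n)) = 1 :=
    inv_mul_cancel₀ hne
  have e2 := congrArg (padicNorm p) e
  rw [padicNorm.mul, padicNorm.one] at e2
  have h1 := padicNorm.nonneg (p := p) (rubanCQQ p α (n + 1))
  have h2 := padicNorm.nonneg (p := p) (rubanCQQ p α n - rubanFloorQ p (rubanCQQ p α n))
  nlinarith

/-- Seidel–Stern type convergence. -/
lemma cf_converges (a : ℕ → ℚ) (hpos : ∀ n, 0 < a (n + 1))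
    (hfreq : ∀ N, ∃ n, N ≤ n ∧ 1 / 2 < a n) :
    ∃ L : ℝ, Tendsto (fun n : ℕ => ((cfNum a n / cfDen a n : ℚ) : ℝ)) atTop (𝓝 L) := by
  have qrec : ∀ n, cfDen a (n + 2) = a (n + 1) * cfDen a (n + 1) + cfDen a n := fun n => rfl
  have prec : ∀ n, cfNum a (n + 2) = a (n + 1) * cfNum a (n + 1) + cfNum a n := fun n => rfl
  have q1 : cfDen a 1 = 1 := rfl
  have q2 : cfDen a 2 = a 1 := by rw [qrec 0, q1]; simp [cfDen]
  obtain ⟨c, hc0, hc1, hca⟩ : ∃ c : ℚ, 0 < c ∧ c ≤ 1 ∧ c ≤ a 1 :=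
    ⟨min 1 (a 1), lt_min one_pos (hpos 0), min_le_left _ _, min_le_right _ _⟩
  have qc : ∀ n, c ≤ cfDen a (n + 1) ∧ c ≤ cfDen a (n + 2) := by
    intro n
    induction n with
    | zero => exact ⟨by rw [q1]; exact hc1, by rw [q2]; exact hca⟩
    | succ n ih =>
      refine ⟨ih.2, ?_⟩
      rw [qrec (n + 1)]
      have := mul_pos (hpos (n + 1)) (hc0.trans_le ih.2)
      show c ≤ a (n + 1 + 1) * cfDen a (n + 2) + cfDen a (n + 1)
      linarith [ih.1]
  have qpos : ∀ n, 0 < cfDen a (n + 1) := fun n => hc0.trans_le (qc n).1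
  have det : ∀ n, cfNum a (n + 1) * cfDen a n - cfNum a n * cfDen a (n + 1) = -(-1) ^ n := by
    intro n
    induction n with
    | zero => simp [cfNum, cfDen]
    | succ n ih =>
      rw [prec, qrec, pow_succ]
      linear_combination -ih
  set u : ℕ → ℝ := fun n => ((cfDen a (n + 1) * cfDen a (n + 2) : ℚ) : ℝ) with hu
  have upos : ∀ n, 0 < u n := fun n => by
    have := mul_pos (qpos n) (qpos (n + 1))
    simp only [hu]; exact_mod_cast this
  have ustep : ∀ n, u n + c ^ 2 * a (n + 2) ≤ u (n + 1) := by
    intro n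
    have h : cfDen a (n + 1) * cfDen a (n + 2) + c ^ 2 * a (n + 2)
        ≤ cfDen a (n + 2) * cfDen a (n + 3) := by
      rw [qrec (n + 1)]
      have h1 : c ^ 2 ≤ cfDen a (n + 2) ^ 2 := by
        have := (qc n).2
        gcongr
      have h2 := mul_le_mul_of_nonneg_right h1 (hpos (n + 1)).le
      show _ ≤ cfDen a (n + 2) * (a (n + 2) * cfDen a (n + 2) + cfDen a (n + 1))
      have h3 : c ^ 2 * a (n + 2) ≤ cfDen a (n + 2) ^ 2 * a (n + 2) := h2
      linarith
    simp only [hu]; exact_mod_cast h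
  have umono : Monotone u := monotone_nat_of_le_succ fun n => by
    have h1 := ustep n
    have h2 : (0 : ℝ) < c ^ 2 * a (n + 2) := by
      have := mul_pos (pow_pos hc0 2) (hpos (n + 1))
      exact_mod_cast this
    linarith
  have utop : Tendsto u atTop atTop := by
    rcases tendsto_atTop_of_monotone umono with h | ⟨l, hl⟩
    · exact h
    · exfalso
      have hd : Tendsto (fun n => u (n + 1) - u n) atTop (𝓝 0) := by
        simpa using (hl.comp (tendsto_add_atTop_nat 1)).sub hl
      have hcp : (0 : ℝ) < c ^ 2 * (1 / 2) := by
        have : (0 : ℝ) < c := by exact_mod_cast hc0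
        positivity
      obtain ⟨N, hN⟩ := eventually_atTop.1 (hd.eventually_lt_const hcp)
      obtain ⟨n, hn, han⟩ := hfreq (N + 2)
      obtain ⟨m, rfl⟩ : ∃ m, n = m + 2 := ⟨n - 2, by omega⟩
      have h1 := hN m (by omega)
      have h2 := ustep m
      have h3 : (c : ℝ) ^ 2 * (1 / 2) ≤ c ^ 2 * a (m + 2) := by
        have : (1 / 2 : ℝ) ≤ a (m + 2) := by
          have h4 : ((1 / 2 : ℚ) : ℝ) ≤ a (m + 2) := Rat.cast_le.2 han.le
          push_cast at h4
          exact h4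
        gcongr
      linarith
  have hanti : Antitone fun n => (u n)⁻¹ := fun m n h =>
    inv_anti₀ (upos m) (umono h)
  obtain ⟨l, hl⟩ := hanti.tendsto_alternating_series_of_tendsto_zero utop.inv_tendsto_atTop
  refine ⟨(a 0 : ℝ) + l, ?_⟩
  rw [← tendsto_add_atTop_iff_nat 1]
  refine (hl.const_add (a 0 : ℝ)).congr fun n => ?_
  induction n with
  | zero => simp [cfNum, cfDen]
  | succ n ih =>
    rw [Finset.sum_range_succ, ← add_assoc, ih]
    have hd := det (n + 1)
    have e : cfNum a (n + 1) / cfDen a (n + 1)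
        + (-1) ^ n * (cfDen a (n + 1) * cfDen a (n + 2))⁻¹
        = cfNum a (n + 2) / cfDen a (n + 2) := by
      have h1 := (qpos n).ne'
      have h2 : cfDen a (n + 2) ≠ 0 := (qpos (n + 1)).ne'
      rw [pow_succ] at hd
      field_simp
      linear_combination -hd
    simp only [hu]
    exact_mod_cast e

open Filter Topology in
/-- The convergents of the (non-terminating) Ruban continued fraction
expansion of a rational number converge in `ℝ`. -/
theorem ruban_rational_convergents_converge_in_R
    (ℓ : ℕ) (hℓ : ℓ.Prime) (α : ℚ) (hnt : ¬ RubanTerminatesQ ℓ α) :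
    ∃ L : ℝ, Tendsto
      (fun n : ℕ => ((cfNum (rubanPQQ ℓ α) n / cfDen (rubanPQQ ℓ α) n : ℚ) : ℝ))
      atTop (𝓝 L) := by
  exact cf_converges _ (ruban_pos ℓ hℓ α hnt) (ruban_frequently ℓ hℓ α hnt)
end
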